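/- Logarithmic energy estimate: let B ⊂ V be a finite connected set, let η : V → ℝ satisfy η = 0 outside B, 0 ≤ η ≤ 1 and η ≡ 0 on ∂B, and let K ≥ 1 satisfy η(y)² ≤ K·η(x)² for every {x,y} ∈ E with η(x) ≠ 0. Then for every u : V → (0,∞) with (L_Y^ω u)(x) ≤ 0 for all x ∈ B: E^{ω,η}(ln u)/|B| ≤ 8·K·‖∇η‖²_{ℓ∞(E)}·‖μ^ω‖_{1,B}. -/

import Mathlib

open Finset MeasureTheory
open scoped ENNReal

noncomputable section

namespace RCM

variable {V : Type*}

/-- `μ^ω(x)`, the sum of the weights of edges incident to `x`. -/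
def mu (nbr : V → Finset V) (ω : V → V → ℝ) (x : V) : ℝ := ∑ y ∈ nbr x, ω x y

/-- `ν^ω(x)`, the sum of the reciprocals of the weights of edges incident to `x`. -/
def nu (nbr : V → Finset V) (ω : V → V → ℝ) (x : V) : ℝ := ∑ y ∈ nbr x, (ω x y)⁻¹

/-- `(L_Y^ω f)(x)`. -/
def lap (nbr : V → Finset V) (ω : V → V → ℝ) (f : V → ℝ) (x : V) : ℝ :=
  (mu nbr ω x)⁻¹ * ∑ y ∈ nbr x, ω x y * (f y - f x)

/-- space-averaged norm `‖f‖_{p,A}` for a real exponent `p`. -/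
def nrm (A : Finset V) (p : ℝ) (f : V → ℝ) : ℝ :=
  ((A.card : ℝ)⁻¹ * ∑ x ∈ A, |f x| ^ p) ^ (1 / p)

/-- weighted space-averaged norm `‖f‖_{p,A,φ}` for a real exponent `p`. -/
def nrmW (A : Finset V) (p : ℝ) (φ : V → ℝ) (f : V → ℝ) : ℝ :=
  ((A.card : ℝ)⁻¹ * ∑ x ∈ A, |f x| ^ p * φ x) ^ (1 / p)

/-- space-averaged norm `‖f‖_{p,A}` for an extended exponent `p ∈ (0,∞]`;
for `p = ∞` this is the maximum of `|f|` over `A`. -/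
def nrmE (A : Finset V) (p : ℝ≥0∞) (f : V → ℝ) : ℝ :=
  if p = ⊤ then sSup ((fun x => |f x|) '' (A : Set V)) else nrm A p.toReal f

/-- weighted average `(u)_{A,π}`. -/
def wavg (A : Finset V) (π : V → ℝ) (u : V → ℝ) : ℝ :=
  (∑ x ∈ A, π x * u x) / ∑ x ∈ A, π x

open Classical in
/-- relative internal boundary `∂_B A`. -/
def relBdry (G : SimpleGraph V) (B A : Finset V) : Finset V :=
  A.filter fun z => ∃ y ∈ B, y ∉ A ∧ G.Adj z y

open Classical in
/-- internal boundary `∂B`. -/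
def intBdry (G : SimpleGraph V) (B : Finset V) : Finset V :=
  B.filter fun z => ∃ y, y ∉ B ∧ G.Adj z y

open Classical in
/-- Dirichlet sum `Σ_{x,y ∈ B, x∼y} ω(x,y) (u(x)-u(y))²`. -/
def dSum (G : SimpleGraph V) (ω : V → V → ℝ) (B : Finset V) (u : V → ℝ) : ℝ :=
  ∑ x ∈ B, ∑ y ∈ B, if G.Adj x y then ω x y * (u x - u y) ^ 2 else 0

/-- `E^ω_{η²}(u) = (1/2) Σ_{x,y} η(x)² ω(x,y) (u(y)-u(x))²`. -/
def energySq (ω : V → V → ℝ) (η u : V → ℝ) : ℝ :=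
  (1 / 2) * ∑' x, ∑' y, η x ^ 2 * ω x y * (u y - u x) ^ 2

/-- `E^{ω,η}(u) = (1/2) Σ_{x,y} min(η(x)²,η(y)²) ω(x,y) (u(y)-u(x))²`. -/
def energyMin (ω : V → V → ℝ) (η u : V → ℝ) : ℝ :=
  (1 / 2) * ∑' x, ∑' y, min (η x ^ 2) (η y ^ 2) * ω x y * (u y - u x) ^ 2

/-- `‖∇η‖_{ℓ∞(E)}`, the supremum of `|η(y)-η(x)|` over edges `{x,y}`. -/
def gradSup (G : SimpleGraph V) (η : V → ℝ) : ℝ :=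
  sSup {r : ℝ | ∃ x y, G.Adj x y ∧ r = |η y - η x|}

/-- `u` is caloric on `I × B`: `∂_t u = L_Y^ω u` on `I × B`. -/
def Caloric (nbr : V → Finset V) (ω : V → V → ℝ) (I : Set ℝ) (B : Set V)
    (u : ℝ → V → ℝ) : Prop :=
  ∀ x ∈ B, ∀ t ∈ I, HasDerivAt (fun s => u s x) (lap nbr ω (u t) x) t

/-- `u` is sub-caloric on `I × B`: `∂_t u ≤ L_Y^ω u` on `I × B`. -/
def SubCaloric (nbr : V → Finset V) (ω : V → V → ℝ) (I : Set ℝ) (B : Set V)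
    (u : ℝ → V → ℝ) : Prop :=
  ∀ x ∈ B, ∀ t ∈ I, ∃ d, HasDerivAt (fun s => u s x) d t ∧ d ≤ lap nbr ω (u t) x

/-- `u` is super-caloric on `I × B`: `∂_t u ≥ L_Y^ω u` on `I × B`. -/
def SuperCaloric (nbr : V → Finset V) (ω : V → V → ℝ) (I : Set ℝ) (B : Set V)
    (u : ℝ → V → ℝ) : Prop :=
  ∀ x ∈ B, ∀ t ∈ I, ∃ d, HasDerivAt (fun s => u s x) d t ∧ lap nbr ω (u t) x ≤ d

/-- space-time norm `‖u‖_{p,[a,b]×B,φ}`. -/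
def nrmST (a b : ℝ) (B : Finset V) (p : ℝ) (φ : V → ℝ) (u : ℝ → V → ℝ) : ℝ :=
  ((b - a)⁻¹ * ∫ t in a..b, nrmW B p φ (u t) ^ p) ^ (1 / p)

end RCM

/-!
For `a, b, z > 0` the inequality `(log s)² ≤ s + s⁻¹ - 2`, taken at `s = (a / b) z` and at
`s = a / b`, gives

  `a b (log z)² ≤ 2 (a² (z - 1) + b² (z⁻¹ - 1)) + 4 (a - b)²`.

Put `a = η x`, `b = η y`, `z = u y / u x`, multiply by `ω x y` and sum over `x` and `y`: the first
bracket becomes the pairing of `L u` with the test function `η² / u`, which is nonpositive because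
`u` is superharmonic and `η` vanishes on the boundary. What remains is the Dirichlet energy of `η`.
-/

namespace RCM

section LogInequality

variable {a b z : ℝ}

lemma log_sq_le_add_inv_sub_two (hz : 0 < z) : Real.log z ^ 2 ≤ z + z⁻¹ - 2 := by
  have hsinh : (Real.log z / 2) ^ 2 ≤ Real.sinh (Real.log z / 2) ^ 2 := by
    rw [sq_le_sq, Real.abs_sinh]
    exact Real.self_le_sinh_iff.2 (abs_nonneg _)
  have hcosh := Real.cosh_two_mul (Real.log z / 2)
  rw [Real.cosh_sq, mul_div_cancel₀ _ two_ne_zero, Real.cosh_log hz] at hcosh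
  linarith

lemma mul_mul_log_div_mul_sq_le (ha : 0 < a) (hb : 0 < b) (hz : 0 < z) :
    a * b * Real.log (a / b * z) ^ 2 ≤ a ^ 2 * z + b ^ 2 * z⁻¹ - 2 * a * b :=
  calc a * b * Real.log (a / b * z) ^ 2
      ≤ a * b * (a / b * z + (a / b * z)⁻¹ - 2) := by
        gcongr
        exact log_sq_le_add_inv_sub_two (by positivity)
    _ = a ^ 2 * z + b ^ 2 * z⁻¹ - 2 * a * b := by field_simp

lemma mul_mul_log_sq_le (ha : 0 ≤ a) (hb : 0 ≤ b) (hz : 0 < z) :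
    a * b * Real.log z ^ 2 ≤
      2 * (a ^ 2 * (z - 1) + b ^ 2 * (z⁻¹ - 1)) + 4 * (a - b) ^ 2 := by
  have hz' : 0 < z⁻¹ := inv_pos.2 hz
  rcases ha.eq_or_lt with rfl | ha
  · linarith [mul_nonneg (sq_nonneg b) hz'.le, sq_nonneg b]
  rcases hb.eq_or_lt with rfl | hb
  · linarith [mul_nonneg (sq_nonneg a) hz.le, sq_nonneg a]
  have hshift := mul_mul_log_div_mul_sq_le ha hb hz
  have hratio := mul_mul_log_div_mul_sq_le ha hb one_pos
  rw [Real.log_mul (div_pos ha hb).ne' hz.ne'] at hshift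
  rw [mul_one, inv_one] at hratio
  have hsplit : Real.log z ^ 2 ≤
      2 * (Real.log (a / b) + Real.log z) ^ 2 + 2 * Real.log (a / b) ^ 2 := by
    linarith [sq_nonneg (2 * Real.log (a / b) + Real.log z)]
  linarith [mul_le_mul_of_nonneg_left hsplit (mul_pos ha hb).le]

lemma min_sq_mul_log_sq_le (a b : ℝ) (hz : 0 < z) :
    min (a ^ 2) (b ^ 2) * Real.log z ^ 2 ≤
      2 * (a ^ 2 * (z - 1) + b ^ 2 * (z⁻¹ - 1)) + 4 * (a - b) ^ 2 := by
  have hmin : min (a ^ 2) (b ^ 2) ≤ |a| * |b| := by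
    rw [← sq_abs a, ← sq_abs b]
    rcases le_total |a| |b| with h | h
    · exact (min_le_left _ _).trans (by nlinarith [abs_nonneg a])
    · exact (min_le_right _ _).trans (by nlinarith [abs_nonneg b])
  have hdiff : (|a| - |b|) ^ 2 ≤ (a - b) ^ 2 := sq_le_sq.2 (abs_abs_sub_abs_le_abs_sub a b)
  calc min (a ^ 2) (b ^ 2) * Real.log z ^ 2
      ≤ |a| * |b| * Real.log z ^ 2 := by gcongr
    _ ≤ 2 * (|a| ^ 2 * (z - 1) + |b| ^ 2 * (z⁻¹ - 1)) + 4 * (|a| - |b|) ^ 2 :=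
        mul_mul_log_sq_le (abs_nonneg a) (abs_nonneg b) hz
    _ ≤ 2 * (a ^ 2 * (z - 1) + b ^ 2 * (z⁻¹ - 1)) + 4 * (a - b) ^ 2 := by
        rw [sq_abs, sq_abs]
        gcongr

end LogInequality

section WeightedGraph

variable {V : Type*} {G : SimpleGraph V} {nbr : V → Finset V} {ω : V → V → ℝ} {B : Finset V}
  {η φ u : V → ℝ} {x y : V}

lemma mem_of_adj_of_notMem_intBdry (hx : x ∈ B) (hx' : x ∉ intBdry G B) (hxy : G.Adj x y) :
    y ∈ B := by
  by_contra hy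
  exact hx' (by simpa only [intBdry, Finset.mem_filter] using ⟨hx, y, hy, hxy⟩)

lemma abs_sub_le_gradSup (hη : η.support.Finite) (hxy : G.Adj x y) :
    |η y - η x| ≤ gradSup G η := by
  have hrange : (Set.range η).Finite :=
    ((hη.image η).insert 0).subset (Function.range_subset_insert_image_support η)
  refine le_csSup (Set.Finite.bddAbove ?_) ⟨x, y, hxy, rfl⟩
  refine (hrange.image2 (fun s t => |t - s|) hrange).subset ?_
  rintro _ ⟨x, y, -, rfl⟩
  exact Set.mem_image2_of_mem (Set.mem_range_self x) (Set.mem_range_self y)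

lemma nrm_nonneg (A : Finset V) (p : ℝ) (f : V → ℝ) : 0 ≤ nrm A p f := by
  unfold nrm
  positivity

lemma card_mul_nrm_one (hB : B.Nonempty) {f : V → ℝ} (hf : ∀ x ∈ B, 0 ≤ f x) :
    (B.card : ℝ) * nrm B 1 f = ∑ x ∈ B, f x := by
  have hcard : (B.card : ℝ) ≠ 0 := Nat.cast_ne_zero.2 hB.card_ne_zero
  simp only [nrm, Real.rpow_one, div_one]
  rw [mul_inv_cancel_left₀ hcard]
  exact Finset.sum_congr rfl fun x hx => abs_of_nonneg (hf x hx)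

lemma mu_nonneg (hω : ∀ x y, 0 ≤ ω x y) (x : V) : 0 ≤ mu nbr ω x :=
  Finset.sum_nonneg fun y _ => hω x y

lemma sum_weight_mul_eq_of_nbr_subset (hωnbr : ∀ x, ∀ y ∉ nbr x, ω x y = 0) (hx : nbr x ⊆ B)
    (f : V → ℝ) : ∑ y ∈ nbr x, ω x y * f y = ∑ y ∈ B, ω x y * f y :=
  Finset.sum_subset hx fun y _ hy => by rw [hωnbr x y hy, zero_mul]

lemma sum_weight_le_mu (hω : ∀ x y, 0 ≤ ω x y) (hωnbr : ∀ x, ∀ y ∉ nbr x, ω x y = 0)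
    (B : Finset V) (x : V) : ∑ y ∈ B, ω x y ≤ mu nbr ω x := by
  classical
  calc ∑ y ∈ B, ω x y
      = ∑ y ∈ B with y ∈ nbr x, ω x y :=
        (Finset.sum_filter_of_ne fun y _ => not_imp_comm.1 (hωnbr x y)).symm
    _ ≤ mu nbr ω x :=
        Finset.sum_le_sum_of_subset_of_nonneg
          (fun y hy => (Finset.mem_filter.1 hy).2) fun y _ _ => hω x y

lemma sum_weight_mul_sub_nonpos_of_lap_nonpos (hω : ∀ x y, 0 ≤ ω x y)
    (hx : lap nbr ω u x ≤ 0) : ∑ y ∈ nbr x, ω x y * (u y - u x) ≤ 0 := by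
  rcases (mu_nonneg (nbr := nbr) hω x).eq_or_lt with hmu | hmu
  · have hzero := (Finset.sum_eq_zero_iff_of_nonneg fun y _ => hω x y).1 hmu.symm
    exact (Finset.sum_eq_zero fun y hy => by rw [hzero y hy, zero_mul]).le
  · exact nonpos_of_mul_nonpos_right hx (inv_pos.2 hmu)

lemma sum_sum_weight_mul_mul_sub_nonpos (hω : ∀ x y, 0 ≤ ω x y)
    (hωnbr : ∀ x, ∀ y ∉ nbr x, ω x y = 0) (hφ : ∀ x ∈ B, 0 ≤ φ x)
    (hφB : ∀ x ∈ B, φ x ≠ 0 → nbr x ⊆ B) (hu : ∀ x ∈ B, lap nbr ω u x ≤ 0) :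
    ∑ x ∈ B, ∑ y ∈ B, ω x y * (φ x * (u y - u x)) ≤ 0 := by
  refine Finset.sum_nonpos fun x hx => ?_
  simp only [mul_left_comm (ω x _), ← Finset.mul_sum]
  by_cases hφx : φ x = 0
  · rw [hφx, zero_mul]
  · rw [← sum_weight_mul_eq_of_nbr_subset hωnbr (hφB x hx hφx) fun y => u y - u x]
    exact mul_nonpos_of_nonneg_of_nonpos (hφ x hx)
      (sum_weight_mul_sub_nonpos_of_lap_nonpos hω (hu x hx))

lemma sum_sum_weight_mul_sq_sub_le (hω : ∀ x y, 0 ≤ ω x y)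
    (hωnbr : ∀ x, ∀ y ∉ nbr x, ω x y = 0) (hnbr : ∀ x, ∀ y ∈ nbr x, G.Adj x y)
    (hη : η.support.Finite) (B : Finset V) :
    ∑ x ∈ B, ∑ y ∈ B, ω x y * (η x - η y) ^ 2 ≤
      gradSup G η ^ 2 * ∑ x ∈ B, mu nbr ω x := by
  have hedge (x y : V) : ω x y * (η x - η y) ^ 2 ≤ gradSup G η ^ 2 * ω x y := by
    by_cases hy : y ∈ nbr x
    · rw [mul_comm, ← sq_abs, abs_sub_comm]
      gcongr
      · exact hω x y
      · exact abs_sub_le_gradSup hη (hnbr x y hy)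
    · rw [hωnbr x y hy, zero_mul, mul_zero]
  rw [Finset.mul_sum]
  refine Finset.sum_le_sum fun x _ => ?_
  calc ∑ y ∈ B, ω x y * (η x - η y) ^ 2
      ≤ ∑ y ∈ B, gradSup G η ^ 2 * ω x y := Finset.sum_le_sum fun y _ => hedge x y
    _ = gradSup G η ^ 2 * ∑ y ∈ B, ω x y := (Finset.mul_sum ..).symm
    _ ≤ gradSup G η ^ 2 * mu nbr ω x := by
        gcongr
        exact sum_weight_le_mu hω hωnbr B x

lemma energyMin_eq_sum (hη : ∀ x ∉ B, η x = 0) (f : V → ℝ) :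
    energyMin ω η f =
      (1 / 2) * ∑ x ∈ B, ∑ y ∈ B, min (η x ^ 2) (η y ^ 2) * ω x y * (f y - f x) ^ 2 := by
  have hmin {x y : V} (h : x ∉ B ∨ y ∉ B) : min (η x ^ 2) (η y ^ 2) = 0 := by
    rcases h with h | h
    · simpa [hη x h] using sq_nonneg (η y)
    · simpa [hη y h] using sq_nonneg (η x)
  have hinner (x : V) := tsum_eq_sum (L := .unconditional V) (s := B)
    (f := fun y => min (η x ^ 2) (η y ^ 2) * ω x y * (f y - f x) ^ 2)
    fun y hy => by rw [hmin (.inr hy), zero_mul, zero_mul]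
  simp only [energyMin, hinner]
  rw [tsum_eq_sum fun x hx => Finset.sum_eq_zero fun y _ => by
    rw [hmin (.inl hx), zero_mul, zero_mul]]

lemma energyMin_log_le_of_lap_nonpos (hsymm : ∀ x y, ω x y = ω y x) (hω : ∀ x y, 0 ≤ ω x y)
    (hωnbr : ∀ x, ∀ y ∉ nbr x, ω x y = 0) (hη : ∀ x ∉ B, η x = 0)
    (hηB : ∀ x ∈ B, η x ≠ 0 → nbr x ⊆ B) (hpos : ∀ x ∈ B, 0 < u x)
    (hu : ∀ x ∈ B, lap nbr ω u x ≤ 0) :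
    energyMin ω η (fun x => Real.log (u x)) ≤
      2 * ∑ x ∈ B, ∑ y ∈ B, ω x y * (η x - η y) ^ 2 := by
  set φ : V → ℝ := fun x => η x ^ 2 / u x with hφ
  have htest : ∑ x ∈ B, ∑ y ∈ B, ω x y * (φ x * (u y - u x)) ≤ 0 :=
    sum_sum_weight_mul_mul_sub_nonpos hω hωnbr
      (fun x hx => div_nonneg (sq_nonneg _) (hpos x hx).le)
      (fun x hx hφx => hηB x hx fun h => hφx (by simp [hφ, h])) hu
  have htest_swap : ∑ x ∈ B, ∑ y ∈ B, ω x y * (φ y * (u x - u y)) ≤ 0 := by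
    rw [Finset.sum_comm]
    simpa only [fun x y => hsymm y x] using htest
  have hedge (x : V) (hx : x ∈ B) (y : V) (hy : y ∈ B) :
      min (η x ^ 2) (η y ^ 2) * ω x y * (Real.log (u y) - Real.log (u x)) ^ 2 ≤
        2 * (ω x y * (φ x * (u y - u x))) + 2 * (ω x y * (φ y * (u x - u y))) +
          4 * (ω x y * (η x - η y) ^ 2) := by
    have hux := hpos x hx
    have huy := hpos y hy
    have hlog := mul_le_mul_of_nonneg_left
      (min_sq_mul_log_sq_le (η x) (η y) (div_pos huy hux)) (hω x y)
    have hφx : η x ^ 2 * (u y / u x - 1) = φ x * (u y - u x) := by simp only [hφ]; field_simp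
    have hφy : η y ^ 2 * ((u y / u x)⁻¹ - 1) = φ y * (u x - u y) := by simp only [hφ]; field_simp
    rw [hφx, hφy, Real.log_div huy.ne' hux.ne'] at hlog
    linarith
  have hsum := Finset.sum_le_sum fun x hx => Finset.sum_le_sum (hedge x hx)
  simp only [Finset.sum_add_distrib, ← Finset.mul_sum] at hsum
  rw [energyMin_eq_sum hη]
  linarith

end WeightedGraph

end RCM

open RCM in
theorem log_energy_estimate_general
    {V : Type*} (G : SimpleGraph V) (nbr : V → Finset V)
    (hnbr : ∀ x y, y ∈ nbr x ↔ G.Adj x y)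
    (ω : V → V → ℝ)
    (hsymm : ∀ x y, ω x y = ω y x)
    (hω : ∀ x y, 0 ≤ ω x y)
    (hzero : ∀ x y, ¬ G.Adj x y → ω x y = 0)
    (B : Finset V) (hB : B.Nonempty)
    (η : V → ℝ)
    (hηsupp : ∀ x ∉ B, η x = 0)
    (hηbdry : ∀ x ∈ intBdry G B, η x = 0)
    (u : V → ℝ) (hu : ∀ x ∈ B, 0 < u x)
    (hsuper : ∀ x ∈ B, lap nbr ω u x ≤ 0) :
    energyMin ω η (fun x => Real.log (u x)) / (B.card : ℝ) ≤
      2 * gradSup G η ^ 2 * nrm B 1 (mu nbr ω) := by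
  have hωnbr : ∀ x, ∀ y ∉ nbr x, ω x y = 0 := fun x y hy => hzero x y (mt (hnbr x y).2 hy)
  have hηfin : η.support.Finite :=
    B.finite_toSet.subset fun x hx => by_contra fun hxB => hx (hηsupp x hxB)
  have hηB : ∀ x ∈ B, η x ≠ 0 → nbr x ⊆ B := fun x hx h0 y hy =>
    mem_of_adj_of_notMem_intBdry hx (fun h => h0 (hηbdry x h)) ((hnbr x y).1 hy)
  rw [div_le_iff₀ (by exact_mod_cast hB.card_pos)]
  calc energyMin ω η (fun x => Real.log (u x))
      ≤ 2 * ∑ x ∈ B, ∑ y ∈ B, ω x y * (η x - η y) ^ 2 :=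
        energyMin_log_le_of_lap_nonpos hsymm hω hωnbr hηsupp hηB hu hsuper
    _ ≤ 2 * (gradSup G η ^ 2 * ∑ x ∈ B, mu nbr ω x) := by
        gcongr
        exact sum_sum_weight_mul_sq_sub_le hω hωnbr (fun x y => (hnbr x y).1) hηfin B
    _ = 2 * gradSup G η ^ 2 * nrm B 1 (mu nbr ω) * B.card := by
        rw [← card_mul_nrm_one hB fun x _ => mu_nonneg hω x]
        ring

open RCM in
/-- **Logarithmic energy estimate** (Lemma 3.7). -/
theorem log_energy_estimate
    {V : Type*} (G : SimpleGraph V) (nbr : V → Finset V)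
    (hnbr : ∀ x y, y ∈ nbr x ↔ G.Adj x y)
    (ω : V → V → ℝ)
    (hsymm : ∀ x y, ω x y = ω y x)
    (hpos : ∀ x y, G.Adj x y → 0 < ω x y)
    (hzero : ∀ x y, ¬ G.Adj x y → ω x y = 0)
    (B : Finset V) (hBconn : (G.induce (B : Set V)).Connected)
    (η : V → ℝ)
    (hηsupp : ∀ x ∉ B, η x = 0)
    (hη01 : ∀ x, 0 ≤ η x ∧ η x ≤ 1)
    (hηbdry : ∀ x ∈ intBdry G B, η x = 0)
    (K : ℝ) (hK : 1 ≤ K)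
    (hosc : ∀ x y, G.Adj x y → η x ≠ 0 → η y ^ 2 ≤ K * η x ^ 2)
    (u : V → ℝ) (hu : ∀ x, 0 < u x)
    (hsuper : ∀ x ∈ B, lap nbr ω u x ≤ 0) :
    energyMin ω η (fun x => Real.log (u x)) / (B.card : ℝ) ≤
      8 * K * gradSup G η ^ 2 * nrm B 1 (mu nbr ω) := by
  have hω (x y : V) : 0 ≤ ω x y :=
    (em (G.Adj x y)).elim (fun h => (hpos x y h).le) fun h => (hzero x y h).ge
  have hB : B.Nonempty := Finset.coe_nonempty.1 (Set.nonempty_coe_sort.1 hBconn.nonempty)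
  calc energyMin ω η (fun x => Real.log (u x)) / (B.card : ℝ)
      ≤ 2 * gradSup G η ^ 2 * nrm B 1 (mu nbr ω) :=
        log_energy_estimate_general G nbr hnbr ω hsymm hω hzero B hB η hηsupp hηbdry u
          (fun x _ => hu x) hsuper
    _ ≤ 8 * K * gradSup G η ^ 2 * nrm B 1 (mu nbr ω) := by
        gcongr
        · exact nrm_nonneg B 1 _
        · linarith
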